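/- arXiv:cs/0206025 — 13 statements merged into one kernel-verified Lean document; each statement's English description precedes it below -/
import Mathlib

section
/- Let (X, ⊑) be a complete lattice and let M : X → [0,1] be a fuzzy sublattice of X. Then M is a fuzzy convex sublattice of X if and only if for all x, y ∈ X and all z with x ⊓ y ⊑ z ⊑ x ⊔ y one has M(z) ≥ M(x ⊓ y) ∧ M(x ⊔ y) and moreover M(x ⊓ y) ∧ M(x ⊔ y) = M(x) ∧ M(y), where ∧ denotes minimum in [0,1]. -/
/- The membership grade lattice `L = [0,1]`. -/
instance : Fact ((0:ℝ) ≤ 1) := ⟨zero_le_one⟩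

/-- A subset `S` of a lattice `X` is a closed interval iff it is empty or
of the form `[a, b] = {z : a ⊑ z ⊑ b}` for some `a b : X`. -/
def IsClosedInterval {X : Type*} [Lattice X] (S : Set X) : Prop :=
  S = ∅ ∨ ∃ a b : X, S = Set.Icc a b

/-- The `p`-cut of a fuzzy set `M : X → [0,1]` is `{x : M x ≥ p}`. -/
def cut {X : Type*} (M : X → unitInterval) (p : unitInterval) : Set X :=
  {x | p ≤ M x}

/-- A fuzzy set `M : X → [0,1]` is a fuzzy interval iff every `p`-cut
of `M` is a closed interval of `X`. -/
def IsFuzzyInterval {X : Type*} [Lattice X] (M : X → unitInterval) : Prop :=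
  ∀ p : unitInterval, IsClosedInterval (cut M p)

/-- Let `M` be a fuzzy sublattice. Then `M` is a fuzzy convex sublattice iff
for all `x y` and every `z ∈ [x ⊓ y, x ⊔ y]` one has
`M z ≥ M (x ⊓ y) ∧ M (x ⊔ y)`, and moreover `M (x ⊓ y) ∧ M (x ⊔ y) = M x ∧ M y`. -/
theorem fuzzy_convex_sublattice_iff {X : Type*} [CompleteLattice X] (M : X → unitInterval)
    (hsub : ∀ p : unitInterval, ∀ x ∈ cut M p, ∀ y ∈ cut M p,
      x ⊓ y ∈ cut M p ∧ x ⊔ y ∈ cut M p) :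
    (∀ p : unitInterval, ∀ x ∈ cut M p, ∀ y ∈ cut M p,
        Set.Icc (x ⊓ y) (x ⊔ y) ⊆ cut M p) ↔
    ∀ x y : X,
      (∀ z ∈ Set.Icc (x ⊓ y) (x ⊔ y), min (M (x ⊓ y)) (M (x ⊔ y)) ≤ M z) ∧
      min (M (x ⊓ y)) (M (x ⊔ y)) = min (M x) (M y) := by
  constructor
  · intro h x y
    have key : ∀ z ∈ Set.Icc (x ⊓ y) (x ⊔ y), min (M (x ⊓ y)) (M (x ⊔ y)) ≤ M z := by
      intro z hz
      have hle : x ⊓ y ≤ x ⊔ y := le_trans hz.1 hz.2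
      refine h (min (M (x ⊓ y)) (M (x ⊔ y))) (x ⊓ y) (min_le_left (M (x ⊓ y)) (M (x ⊔ y))) (x ⊔ y)
        (min_le_right (M (x ⊓ y)) (M (x ⊔ y))) ?_
      rw [inf_eq_left.mpr hle, sup_eq_right.mpr hle]
      exact hz
    refine ⟨key, le_antisymm ?_ ?_⟩
    · exact le_min (key x ⟨inf_le_left, le_sup_left⟩) (key y ⟨inf_le_right, le_sup_right⟩)
    · have hs := hsub (min (M x) (M y)) x (min_le_left (M x) (M y)) y (min_le_right (M x) (M y))
      exact le_min hs.1 hs.2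
  · intro h p x hx y hy z hz
    have h1 := (h x y).1 z hz
    rw [(h x y).2] at h1
    exact le_trans (le_min hx hy) h1
end

section
/- Let (X, ⊑) be a complete lattice and let {M_i}_{i ∈ J} be an arbitrary family of fuzzy intervals of X. Then the pointwise infimum M, defined by M(x) = inf_{i ∈ J} M_i(x) for each x ∈ X, is a fuzzy interval of X. -/
/-- The pointwise infimum of an arbitrary family of fuzzy intervals is a fuzzy interval. -/
theorem iInf_of_fuzzy_intervals {X : Type*} [CompleteLattice X] {J : Type*}
    (M : J → X → unitInterval) (hM : ∀ i, IsFuzzyInterval (M i)) :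
    IsFuzzyInterval (fun x => ⨅ i, M i x) := by
  intro p
  have key : cut (fun x => ⨅ i, M i x) p = ⋂ i, cut (M i) p := by
    ext x
    simp only [cut, Set.mem_setOf_eq, Set.mem_iInter]
    exact le_iInf_iff
  rw [key]
  by_cases h : ∃ i, cut (M i) p = ∅
  · obtain ⟨i, hi⟩ := h
    left
    exact Set.subset_eq_empty (Set.iInter_subset _ i) hi
  · right
    have h2 : ∀ i, ∃ a b : X, cut (M i) p = Set.Icc a b := fun i =>
      (hM i p).resolve_left fun e => h ⟨i, e⟩
    choose a b hab using h2
    refine ⟨⨆ i, a i, ⨅ i, b i, ?_⟩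
    ext x
    simp only [hab, Set.mem_iInter, Set.mem_Icc, iSup_le_iff, le_iInf_iff, forall_and]
end

section
/- Let (X, ⊑) be a complete lattice and let M, N be fuzzy intervals of X. Define M ∨̇ N as the pointwise infimum of the family S(M,N) of all fuzzy intervals A of X satisfying M ≤ A and N ≤ A (pointwise order). Then M ∨̇ N is itself a fuzzy interval, M ≤ M ∨̇ N, N ≤ M ∨̇ N, and for every fuzzy interval B with M ≤ B and N ≤ B one has M ∨̇ N ≤ B; that is, M ∨̇ N is the supremum of M and N within the set of fuzzy intervals. -/
/-- `M ∨̇ N`: the pointwise infimum of all fuzzy intervals dominating both `M` and `N`. -/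
noncomputable def fuzzySup {X : Type*} [Lattice X] (M N : X → unitInterval) :
    X → unitInterval :=
  fun x => ⨅ A ∈ {A : X → unitInterval | IsFuzzyInterval A ∧ M ≤ A ∧ N ≤ A}, A x

/-- For fuzzy intervals `M, N` of a complete lattice, `M ∨̇ N` is a fuzzy interval
and is the least upper bound of `M` and `N` among fuzzy intervals. -/
theorem fuzzySup_is_lub {X : Type*} [CompleteLattice X] (M N : X → unitInterval)
    (hM : IsFuzzyInterval M) (hN : IsFuzzyInterval N) :
    IsFuzzyInterval (fuzzySup M N) ∧ M ≤ fuzzySup M N ∧ N ≤ fuzzySup M N ∧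
    ∀ B : X → unitInterval, IsFuzzyInterval B → M ≤ B → N ≤ B → fuzzySup M N ≤ B := by
  have key : ∀ (p : unitInterval) (x : X), p ≤ fuzzySup M N x ↔
      ∀ A : X → unitInterval, IsFuzzyInterval A → M ≤ A → N ≤ A → p ≤ A x := by
    intro p x
    unfold fuzzySup
    rw [le_iInf₂_iff]
    exact ⟨fun h A h1 h2 h3 => h A ⟨h1, h2, h3⟩, fun h A hA => h A hA.1 hA.2.1 hA.2.2⟩
  refine ⟨?_, ?_, ?_, ?_⟩
  · intro p
    by_cases hC : cut (fuzzySup M N) p = ∅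
    · exact Or.inl hC
    right
    obtain ⟨c, hc⟩ := Set.nonempty_iff_ne_empty.mpr hC
    refine ⟨sInf (cut (fuzzySup M N) p), sSup (cut (fuzzySup M N) p), ?_⟩
    apply Set.Subset.antisymm
    · intro x hx
      exact ⟨sInf_le hx, le_sSup hx⟩
    · intro x hx
      refine (key p x).2 fun A hA h1 h2 => ?_
      have hsub : cut (fuzzySup M N) p ⊆ cut A p := fun y hy => (key p y).1 hy A hA h1 h2
      have hxA : x ∈ cut A p := by
        rcases hA p with h | ⟨a, b, h⟩
        · exact absurd (hsub hc) (by simp [h])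
        · rw [h] at hsub ⊢
          exact ⟨(le_sInf fun y hy => (hsub hy).1).trans hx.1,
            hx.2.trans (sSup_le fun y hy => (hsub hy).2)⟩
      exact hxA
  · exact fun x => (key _ x).2 fun A _ h1 _ => h1 x
  · exact fun x => (key _ x).2 fun A _ _ h2 => h2 x
  · exact fun B hB h1 h2 x => (key _ x).1 le_rfl B hB h1 h2
end

section
/- Let (X, ⊑) be a complete lattice and let J be an arbitrary family of fuzzy intervals of X. Define ∨̇J as the pointwise infimum of the family of all fuzzy intervals A of X satisfying M ≤ A for every M ∈ J. Then ∨̇J is a fuzzy interval, M ≤ ∨̇J for every M ∈ J, and ∨̇J ≤ A for every fuzzy interval A that dominates every member of J; that is, every family of fuzzy intervals has a supremum within the set of fuzzy intervals (so the fuzzy intervals of X form a complete lattice under the pointwise order). -/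
/-- `∨̇ J`: the pointwise infimum of all fuzzy intervals dominating every member of `J`. -/
noncomputable def fuzzySupFam {X : Type*} [Lattice X] (J : Set (X → unitInterval)) :
    X → unitInterval :=
  fun x => ⨅ A ∈ {A : X → unitInterval | IsFuzzyInterval A ∧ ∀ M ∈ J, M ≤ A}, A x

/-- Every family `J` of fuzzy intervals of a complete lattice has a supremum `∨̇ J`
within the set of fuzzy intervals; hence the fuzzy intervals form a complete lattice. -/
theorem fuzzySupFam_is_lub {X : Type*} [CompleteLattice X]
    (J : Set (X → unitInterval)) (hJ : ∀ M ∈ J, IsFuzzyInterval M) :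
    IsFuzzyInterval (fuzzySupFam J) ∧ (∀ M ∈ J, M ≤ fuzzySupFam J) ∧
    ∀ A : X → unitInterval, IsFuzzyInterval A → (∀ M ∈ J, M ≤ A) →
      fuzzySupFam J ≤ A := by
  have key : ∀ (p : unitInterval) (x : X), p ≤ fuzzySupFam J x ↔
      ∀ A : X → unitInterval, IsFuzzyInterval A → (∀ M ∈ J, M ≤ A) → p ≤ A x := by
    intro p x
    simp only [fuzzySupFam, le_iInf_iff, Set.mem_setOf_eq, and_imp]
  refine ⟨?_, ?_, ?_⟩
  · intro p
    by_cases he : cut (fuzzySupFam J) p = ∅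
    · exact Or.inl he
    right
    obtain ⟨x₀, hx₀⟩ := Set.nonempty_iff_ne_empty.mpr he
    refine ⟨sInf (cut (fuzzySupFam J) p), sSup (cut (fuzzySupFam J) p), ?_⟩
    apply Set.Subset.antisymm
    · intro x hx
      exact ⟨sInf_le hx, le_sSup hx⟩
    · rintro x ⟨h1, h2⟩
      refine (key p x).2 fun A hA hM => ?_
      have hsub : ∀ y ∈ cut (fuzzySupFam J) p, y ∈ cut A p :=
        fun y hy => (key p y).1 hy A hA hM
      rcases hA p with h | ⟨a, b, h⟩
      · have := hsub x₀ hx₀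
        rw [h] at this
        exact this.elim
      · have hx : x ∈ cut A p := by
          rw [h] at hsub ⊢
          exact ⟨(le_sInf fun y hy => (hsub y hy).1).trans h1,
            h2.trans (sSup_le fun y hy => (hsub y hy).2)⟩
        exact hx
  · intro M hM x
    exact (key _ x).2 fun A _ h => h M hM x
  · intro A hA hM x
    exact (key _ x).1 le_rfl A hA hM
end

section
/- Let (X, ⊑) be a complete lattice and let M : X → [0,1] be a fuzzy convex sublattice of X. Suppose that for every p ∈ [0,1] with M_p nonempty one has M(⊓M_p) ≥ inf_{x ∈ M_p} M(x) and M(⊔M_p) ≥ inf_{x ∈ M_p} M(x). Then M is a fuzzy interval of X; in fact, for every p with M_p nonempty, M_p = [⊓M_p, ⊔M_p]. -/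
/-- A fuzzy convex sublattice `M` satisfying `M (⊓ M_p) ≥ ⨅_{x ∈ M_p} M x` and
`M (⊔ M_p) ≥ ⨅_{x ∈ M_p} M x` for every `p` with nonempty cut is a fuzzy interval,
and `M_p = [⊓ M_p, ⊔ M_p]` for every such `p`. -/
theorem fuzzy_convex_sublattice_is_fuzzy_interval {X : Type*} [CompleteLattice X]
    (M : X → unitInterval)
    (hconv : ∀ p : unitInterval, ∀ x ∈ cut M p, ∀ y ∈ cut M p,
      Set.Icc (x ⊓ y) (x ⊔ y) ⊆ cut M p)
    (h : ∀ p : unitInterval, (cut M p).Nonempty →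
      (⨅ x ∈ cut M p, M x) ≤ M (sInf (cut M p)) ∧
      (⨅ x ∈ cut M p, M x) ≤ M (sSup (cut M p))) :
    IsFuzzyInterval M ∧
    ∀ p : unitInterval, (cut M p).Nonempty →
      cut M p = Set.Icc (sInf (cut M p)) (sSup (cut M p)) := by
  have key : ∀ p : unitInterval, (cut M p).Nonempty →
      cut M p = Set.Icc (sInf (cut M p)) (sSup (cut M p)) := by
    intro p hp
    have hle : p ≤ ⨅ x ∈ cut M p, M x := le_iInf₂ fun x hx => hx
    have ha : sInf (cut M p) ∈ cut M p := hle.trans (h p hp).1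
    have hb : sSup (cut M p) ∈ cut M p := hle.trans (h p hp).2
    apply Set.Subset.antisymm
    · intro x hx
      exact ⟨sInf_le hx, le_sSup hx⟩
    · intro x hx
      exact hconv p _ ha _ hb ⟨inf_le_left.trans hx.1, hx.2.trans le_sup_right⟩
  refine ⟨fun p => ?_, key⟩
  rcases (cut M p).eq_empty_or_nonempty with he | hn
  · exact Or.inl he
  · exact Or.inr ⟨_, _, key p hn⟩
end

section
/- Let (X, ⊑) be a complete lattice and let M : X → [0,1] be a fuzzy interval of X. Then M is a fuzzy convex sublattice of X, and for every p ∈ [0,1] with M_p nonempty one has M(⊓M_p) ≥ inf_{x ∈ M_p} M(x) and M(⊔M_p) ≥ inf_{x ∈ M_p} M(x). -/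
/-- A fuzzy interval `M` is a fuzzy convex sublattice and satisfies
`M (⊓ M_p) ≥ ⨅_{x ∈ M_p} M x` and `M (⊔ M_p) ≥ ⨅_{x ∈ M_p} M x` for every `p`
with nonempty cut. -/
theorem fuzzy_interval_is_fuzzy_convex_sublattice {X : Type*} [CompleteLattice X]
    (M : X → unitInterval) (hM : IsFuzzyInterval M) :
    (∀ p : unitInterval, ∀ x ∈ cut M p, ∀ y ∈ cut M p,
      Set.Icc (x ⊓ y) (x ⊔ y) ⊆ cut M p) ∧
    ∀ p : unitInterval, (cut M p).Nonempty →
      (⨅ x ∈ cut M p, M x) ≤ M (sInf (cut M p)) ∧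
      (⨅ x ∈ cut M p, M x) ≤ M (sSup (cut M p)) := by
  have key : ∀ p : unitInterval, (cut M p).Nonempty →
      sInf (cut M p) ∈ cut M p ∧ sSup (cut M p) ∈ cut M p := by
    intro p hne
    rcases hM p with h | ⟨a, b, h⟩
    · rw [h] at hne
      exact absurd hne Set.not_nonempty_empty
    · rw [h] at hne ⊢
      have hab : a ≤ b := Set.nonempty_Icc.mp hne
      rw [(isGLB_Icc hab).sInf_eq, (isLUB_Icc hab).sSup_eq]
      exact ⟨Set.left_mem_Icc.mpr hab, Set.right_mem_Icc.mpr hab⟩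
  refine ⟨?_, fun p hne => ⟨iInf₂_le _ (key p hne).1, iInf₂_le _ (key p hne).2⟩⟩
  intro p x hx y hy z hz
  rcases hM p with h | ⟨a, b, h⟩
  · rw [h] at hx
    exact hx.elim
  · rw [h] at hx hy ⊢
    exact ⟨(le_inf hx.1 hy.1).trans hz.1, hz.2.trans (sup_le hx.2 hy.2)⟩
end

section
/- Let (X, ⊑) be a complete lattice and let M : X → [0,1] be a fuzzy interval of X. Then for every p ∈ [0,1] with M_p nonempty one has M(⊓M_p) ∧ M(⊔M_p) = inf_{x ∈ M_p} M(x), where ∧ denotes minimum in [0,1]. -/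
/-- For a fuzzy interval `M` and any `p` with nonempty cut:
`M (⊓ M_p) ∧ M (⊔ M_p) = ⨅_{x ∈ M_p} M x`. -/
theorem fuzzy_interval_endpoint_min {X : Type*} [CompleteLattice X]
    (M : X → unitInterval) (hM : IsFuzzyInterval M) :
    ∀ p : unitInterval, (cut M p).Nonempty →
      min (M (sInf (cut M p))) (M (sSup (cut M p))) = ⨅ x ∈ cut M p, M x := by
  intro p hp
  have hc : cut M p = Set.Icc (sInf (cut M p)) (sSup (cut M p)) := by
    rcases hM p with h | ⟨a, b, h⟩
    · rw [h] at hp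
      exact absurd hp Set.not_nonempty_empty
    · rw [h] at hp ⊢
      have hab : a ≤ b := Set.nonempty_Icc.mp hp
      rw [(isGLB_Icc hab).sInf_eq, (isLUB_Icc hab).sSup_eq]
  have hle : sInf (cut M p) ≤ sSup (cut M p) := sInf_le_sSup hp
  have hi : sInf (cut M p) ∈ cut M p := by
    have := Set.left_mem_Icc.mpr hle
    rwa [← hc] at this
  have hs : sSup (cut M p) ∈ cut M p := by
    have := Set.right_mem_Icc.mpr hle
    rwa [← hc] at this
  apply le_antisymm
  · refine le_iInf₂ fun x hx => ?_
    generalize hq : min (M (sInf (cut M p))) (M (sSup (cut M p))) = q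
    have h1 : sInf (cut M p) ∈ cut M q := by
      rw [← hq, cut, Set.mem_setOf_eq]; exact min_le_left _ _
    have h2 : sSup (cut M p) ∈ cut M q := by
      rw [← hq, cut, Set.mem_setOf_eq]; exact min_le_right _ _
    have hx' : x ∈ cut M q := by
      rcases hM q with h | ⟨a, b, h⟩
      · rw [h] at h1
        exact absurd h1 (Set.notMem_empty _)
      · rw [h] at h1 h2 ⊢
        exact ⟨h1.1.trans (sInf_le hx), (le_sSup hx).trans h2.2⟩
    exact hx'
  · exact le_min (iInf₂_le _ hi) (iInf₂_le _ hs)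
end

section
/- Let (X, ⊑) be a finite nonempty lattice (hence a complete lattice) and let M : X → [0,1] be a fuzzy set. Then M is a fuzzy convex sublattice of X if and only if M is a fuzzy interval of X. -/
/-- In a finite nonempty lattice, a fuzzy set is a fuzzy convex sublattice iff it
is a fuzzy interval. -/
theorem fuzzy_convex_iff_fuzzy_interval_of_finite {X : Type*} [Lattice X]
    [Fintype X] [Nonempty X] (M : X → unitInterval) :
    (∀ p : unitInterval, ∀ x ∈ cut M p, ∀ y ∈ cut M p,
      Set.Icc (x ⊓ y) (x ⊔ y) ⊆ cut M p) ↔ IsFuzzyInterval M := by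
  constructor
  · intro h p
    rcases Set.eq_empty_or_nonempty (cut M p) with he | hne
    · exact Or.inl he
    · right
      have hf : (cut M p).Finite := Set.toFinite _
      obtain ⟨a, ha⟩ := hf.exists_minimal hne
      obtain ⟨b, hb⟩ := hf.exists_maximal hne
      refine ⟨a, b, Set.Subset.antisymm ?_ ?_⟩
      · intro x hx
        have h1 : a ⊓ x ∈ cut M p := h p a ha.1 x hx ⟨le_rfl, inf_le_sup⟩
        have h2 : b ⊔ x ∈ cut M p := h p b hb.1 x hx ⟨inf_le_sup, le_rfl⟩
        exact ⟨(ha.2 h1 inf_le_left).trans inf_le_right,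
          le_sup_right.trans (hb.2 h2 le_sup_left)⟩
      · intro z hz
        exact h p a ha.1 b hb.1 ⟨inf_le_left.trans hz.1, hz.2.trans le_sup_right⟩
  · intro h p x hx y hy z hz
    rcases h p with he | ⟨a, b, hab⟩
    · rw [he] at hx
      exact hx.elim
    · rw [hab] at hx hy ⊢
      exact ⟨(le_inf hx.1 hy.1).trans hz.1, hz.2.trans (sup_le hx.2 hy.2)⟩
end

section
/- Let (X, ⊑) be a complete lattice and let M : X → [0,1] be a fuzzy interval of X. For any p ∈ [0,1] with M_p nonempty, set p₁ = M(⊓M_p) and p₂ = M(⊔M_p). Then M_p = M_{p₁ ∧ p₂}, where ∧ denotes minimum in [0,1]. -/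
/-- For a fuzzy interval `M` and `p` with nonempty cut, setting `p₁ = M (⊓ M_p)`
and `p₂ = M (⊔ M_p)`, one has `M_p = M_{p₁ ∧ p₂}`. -/
theorem cut_eq_cut_min {X : Type*} [CompleteLattice X]
    (M : X → unitInterval) (hM : IsFuzzyInterval M)
    (p : unitInterval) (hp : (cut M p).Nonempty) :
    cut M p = cut M (min (M (sInf (cut M p))) (M (sSup (cut M p)))) := by
  have h1 : sInf (cut M p) ∈ cut M p ∧ sSup (cut M p) ∈ cut M p := by
    rcases hM p with h | ⟨a, b, h⟩
    · rw [h] at hp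
      exact absurd hp Set.not_nonempty_empty
    · rw [h] at hp ⊢
      have hab : a ≤ b := Set.nonempty_Icc.mp hp
      rw [csInf_Icc hab, csSup_Icc hab]
      exact ⟨Set.left_mem_Icc.mpr hab, Set.right_mem_Icc.mpr hab⟩
  obtain ⟨hi, hs⟩ := h1
  apply Set.Subset.antisymm
  · intro x hx
    have hxi : sInf (cut M p) ≤ x := sInf_le hx
    have hxs : x ≤ sSup (cut M p) := le_sSup hx
    generalize sInf (cut M p) = i at *
    generalize sSup (cut M p) = s at *
    have qi : i ∈ cut M (min (M i) (M s)) := min_le_left (M i) (M s)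
    have qs : s ∈ cut M (min (M i) (M s)) := min_le_right (M i) (M s)
    rcases hM (min (M i) (M s)) with h | ⟨c, d, h⟩
    · rw [h] at qi
      exact absurd qi (Set.notMem_empty _)
    · rw [h] at qi qs ⊢
      exact ⟨qi.1.trans hxi, hxs.trans qs.2⟩
  · intro x hx
    simp only [cut, Set.mem_setOf_eq] at hi hs hx ⊢
    exact le_trans (le_min hi hs) hx
end

section
/- Let (X, ⊑) be a complete lattice, let M : X → [0,1] be a fuzzy interval of X, and let f, g : [0,1] → X be the endpoint functions of M (with f(p) = ⊓M_p, g(p) = ⊔M_p when M_p is nonempty and f(p) = ⊤, g(p) = ⊥ when M_p is empty). Then for every subset P ⊆ [0,1] one has ⊔_{p ∈ P} f(p) = f(⋁P) and ⊓_{p ∈ P} g(p) = g(⋁P), where ⋁P is the supremum of P in [0,1]. -/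
/-- The endpoint functions `f p = ⊓ M_p` (resp. `g p = ⊔ M_p`) of a fuzzy interval
`M`, with `f p = ⊤` and `g p = ⊥` on empty cuts, satisfy:
`⨆_{p ∈ P} f p = f (⋁ P)` and `⨅_{p ∈ P} g p = g (⋁ P)` for every `P ⊆ [0,1]`. -/
theorem endpoint_continuity {X : Type*} [CompleteLattice X]
    (M : X → unitInterval) (hM : IsFuzzyInterval M) (f g : unitInterval → X)
    (hf1 : ∀ p, (cut M p).Nonempty → f p = sInf (cut M p))
    (hf2 : ∀ p, ¬(cut M p).Nonempty → f p = ⊤)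
    (hg1 : ∀ p, (cut M p).Nonempty → g p = sSup (cut M p))
    (hg2 : ∀ p, ¬(cut M p).Nonempty → g p = ⊥) :
    ∀ P : Set unitInterval,
      (⨆ p ∈ P, f p) = f (sSup P) ∧ (⨅ p ∈ P, g p) = g (sSup P) := by
  intro P
  have hf : ∀ p, f p = sInf (cut M p) := by
    intro p
    by_cases h : (cut M p).Nonempty
    · exact hf1 p h
    · rw [hf2 p h, Set.not_nonempty_iff_eq_empty.mp h, sInf_empty]
  have hg : ∀ p, g p = sSup (cut M p) := by
    intro p
    by_cases h : (cut M p).Nonempty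
    · exact hg1 p h
    · rw [hg2 p h, Set.not_nonempty_iff_eq_empty.mp h, sSup_empty]
  have hcut : ∀ p q, p ≤ q → cut M q ⊆ cut M p := fun p q h x hx => le_trans h hx
  have hfm : ∀ p q, p ≤ q → f p ≤ f q := by
    intro p q h
    rw [hf, hf]
    exact sInf_le_sInf (hcut p q h)
  have hgm : ∀ p q, p ≤ q → g q ≤ g p := by
    intro p q h
    rw [hg, hg]
    exact sSup_le_sSup (hcut p q h)
  have hmem : ∀ p, (cut M p).Nonempty → ∀ x, f p ≤ x → x ≤ g p → p ≤ M x := by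
    intro p hp x h1 h2
    rcases hM p with h | ⟨a, b, h⟩
    · exact absurd hp (Set.not_nonempty_iff_eq_empty.mpr h)
    · have hab : a ≤ b := by
        rw [h] at hp
        exact Set.nonempty_Icc.mp hp
      have hx : x ∈ cut M p := by
        rw [hf, h, csInf_Icc hab] at h1
        rw [hg, h, csSup_Icc hab] at h2
        rw [h]
        exact ⟨h1, h2⟩
      exact hx
  have hfle : (⨆ p ∈ P, f p) ≤ f (sSup P) := iSup₂_le fun p hp => hfm _ _ (le_sSup hp)
  have hgle : g (sSup P) ≤ ⨅ p ∈ P, g p := le_iInf₂ fun p hp => hgm _ _ (le_sSup hp)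
  by_cases hne : ∀ p ∈ P, (cut M p).Nonempty
  · have hfg : ∀ p ∈ P, ∀ q ∈ P, f p ≤ g q := by
      intro p hp q hq
      have key : ∀ r, (cut M r).Nonempty → f r ≤ g r := by
        rintro r ⟨x, hx⟩
        rw [hf, hg]
        exact (sInf_le hx).trans (le_sSup hx)
      rcases le_total p q with h | h
      · exact (hfm _ _ h).trans (key q (hne q hq))
      · exact (key p (hne p hp)).trans (hgm _ _ h)
    have h1 : (⨆ p ∈ P, f p) ∈ cut M (sSup P) :=
      sSup_le fun p hp => hmem p (hne p hp) _ (le_iSup₂ (f := fun p _ => f p) p hp)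
        (iSup₂_le fun q hq => hfg q hq p hp)
    have h2 : (⨅ p ∈ P, g p) ∈ cut M (sSup P) :=
      sSup_le fun p hp => hmem p (hne p hp) _ (le_iInf₂ fun q hq => hfg p hp q hq)
        (iInf₂_le (f := fun p _ => g p) p hp)
    refine ⟨le_antisymm hfle ?_, le_antisymm ?_ hgle⟩
    · rw [hf (sSup P)]
      exact sInf_le h1
    · rw [hg (sSup P)]
      exact le_sSup h2
  · push Not at hne
    obtain ⟨p, hp, he⟩ := hne
    have h1 : f p = ⊤ := by rw [hf, he, sInf_empty]
    have h2 : g p = ⊥ := by rw [hg, he, sSup_empty]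
    refine ⟨le_antisymm hfle ?_, le_antisymm ?_ hgle⟩
    · exact le_trans (le_top.trans h1.ge) (le_iSup₂ (f := fun p _ => f p) p hp)
    · exact le_trans (iInf₂_le (f := fun p _ => g p) p hp) (h2.le.trans bot_le)
end

section
/- Let (X, ⊑) be a complete lattice which is completely distributive (i.e., for every x ∈ X and Y ⊆ X: x ⊔ (⊓_{y∈Y} y) = ⊓_{y∈Y}(x ⊔ y) and x ⊓ (⊔_{y∈Y} y) = ⊔_{y∈Y}(x ⊓ y)). Let P ⊆ [0,1] and let F, G : [0,1] → X be functions satisfying: p ≤ q implies F(q) ⊑ F(p) and G(q) ⊑ G(p), and ⊓_{p∈P} F(p) = F(⋁P), ⊓_{p∈P} G(p) = G(⋁P). Then ⊓_{p∈P} (F(p) ⊔ G(p)) = F(⋁P) ⊔ G(⋁P). -/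
/-- In a completely distributive complete lattice: if `F, G : [0,1] → X` are
antitone with `⨅_{p ∈ P} F p = F (⋁ P)` and `⨅_{p ∈ P} G p = G (⋁ P)`, then
`⨅_{p ∈ P} (F p ⊔ G p) = F (⋁ P) ⊔ G (⋁ P)`. -/
theorem inf_of_sup_of_antitone {X : Type*} [CompleteLattice X]
    (hd1 : ∀ (x : X) (Y : Set X), x ⊔ sInf Y = ⨅ y ∈ Y, x ⊔ y)
    (hd2 : ∀ (x : X) (Y : Set X), x ⊓ sSup Y = ⨆ y ∈ Y, x ⊓ y)
    (P : Set unitInterval) (F G : unitInterval → X)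
    (hF : ∀ p q : unitInterval, p ≤ q → F q ≤ F p)
    (hFP : (⨅ p ∈ P, F p) = F (sSup P))
    (hG : ∀ p q : unitInterval, p ≤ q → G q ≤ G p)
    (hGP : (⨅ p ∈ P, G p) = G (sSup P)) :
    (⨅ p ∈ P, F p ⊔ G p) = F (sSup P) ⊔ G (sSup P) := by
  apply le_antisymm
  · have h1 : F (sSup P) = sInf (F '' P) := by rw [sInf_image, hFP]
    have h2 : G (sSup P) = sInf (G '' P) := by rw [sInf_image, hGP]
    rw [h2, hd1]
    refine le_iInf₂ ?_
    rintro _ ⟨p, hp, rfl⟩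
    rw [h1, sup_comm, hd1]
    refine le_iInf₂ ?_
    rintro _ ⟨q, hq, rfl⟩
    rcases le_total p q with h | h
    · refine (iInf₂_le q hq).trans ?_
      exact sup_le le_sup_right ((hG p q h).trans le_sup_left)
    · refine (iInf₂_le p hp).trans ?_
      exact sup_le ((hF q p h).trans le_sup_right) le_sup_left
  · refine le_iInf₂ fun p hp => ?_
    rw [← hFP, ← hGP]
    exact sup_le_sup (iInf₂_le p hp) (iInf₂_le p hp)
end

section
/- Let (X, ⊑) be a completely distributive complete lattice and let M, N : X → [0,1] be fuzzy intervals of X with endpoint functions f_M, g_M and f_N, g_N respectively. For p ∈ [0,1] set D_p(M,N) = [f_M(p) ⊓ f_N(p), g_M(p) ⊔ g_N(p)] (the smallest closed interval containing M_p and N_p). Then: (i) for p ≤ q, D_q(M,N) ⊆ D_p(M,N); (ii) for every P ⊆ [0,1], ⋂_{p∈P} D_p(M,N) = D_{⋁P}(M,N); (iii) D_0(M,N) = X. -/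
theorem key_inf {X : Type*} [CompleteLattice X] (M : X → unitInterval)
    (hM : IsFuzzyInterval M) (P : Set unitInterval) :
    sInf (cut M (sSup P)) ≤ ⨆ p ∈ P, sInf (cut M p) := by
  by_cases h : ∃ p ∈ P, cut M p = ∅
  · obtain ⟨p, hp, he⟩ := h
    refine le_trans ?_ (le_iSup₂ (f := fun p (_ : p ∈ P) => sInf (cut M p)) p hp)
    simp [he]
  · push Not at h
    apply sInf_le
    change sSup P ≤ M _
    refine sSup_le fun p hp => ?_
    change _ ∈ cut M p
    have hn := h p hp
    rcases hM p with he | ⟨a, b, he⟩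
    · rw [he] at hn; exact absurd hn (by simp)
    · have hab : a ≤ b := by
        rw [he] at hn; obtain ⟨y, hy⟩ := hn; exact hy.1.trans hy.2
      have hmem : (⨆ p ∈ P, sInf (cut M p)) ∈ Set.Icc a b := by
        constructor
        · refine le_trans ?_ (le_iSup₂ (f := fun p (_ : p ∈ P) => sInf (cut M p)) p hp)
          exact le_sInf fun y hy => by rw [he] at hy; exact hy.1
        · refine iSup₂_le fun q hq => ?_
          rcases le_total p q with hpq | hpq
          · obtain ⟨y, hy⟩ := h q hq
            have hy2 : y ∈ cut M p := le_trans hpq hy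
            rw [he] at hy2
            exact (sInf_le hy).trans hy2.2
          · obtain ⟨y, hy⟩ := hn
            have hy2 : y ∈ cut M q := le_trans hpq hy
            rw [he] at hy
            exact (sInf_le hy2).trans hy.2
      rw [he]; exact hmem

theorem key_sup {X : Type*} [CompleteLattice X] (M : X → unitInterval)
    (hM : IsFuzzyInterval M) (P : Set unitInterval) :
    ⨅ p ∈ P, sSup (cut M p) ≤ sSup (cut M (sSup P)) := by
  have hM' : IsFuzzyInterval (X := Xᵒᵈ) (fun x => M (OrderDual.ofDual x)) := by
    intro p
    rcases hM p with he | ⟨a, b, he⟩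
    · exact Or.inl he
    · refine Or.inr ⟨OrderDual.toDual b, OrderDual.toDual a, ?_⟩
      ext x
      have := Set.ext_iff.1 he (OrderDual.ofDual x)
      exact this.trans and_comm
  exact key_inf (X := Xᵒᵈ) (fun x => M (OrderDual.ofDual x)) hM' P

theorem dir_inf {X : Type*} [CompleteLattice X]
    (hd2 : ∀ (x : X) (Y : Set X), x ⊓ sSup Y = ⨆ y ∈ Y, x ⊓ y)
    (a b : unitInterval → X) (ha : Monotone a) (hb : Monotone b) (P : Set unitInterval) (z : X)
    (h : ∀ p ∈ P, a p ⊓ b p ≤ z) : (⨆ p ∈ P, a p) ⊓ (⨆ p ∈ P, b p) ≤ z := by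
  rw [← sSup_image, ← sSup_image, hd2]
  refine iSup₂_le ?_
  rintro _ ⟨q, hq, rfl⟩
  rw [inf_comm, hd2]
  refine iSup₂_le ?_
  rintro _ ⟨p, hp, rfl⟩
  rcases le_total p q with hpq | hpq
  · exact le_trans (by rw [inf_comm]; exact inf_le_inf_right _ (ha hpq)) (h q hq)
  · exact le_trans (by rw [inf_comm]; exact inf_le_inf_left _ (hb hpq)) (h p hp)

/-- For fuzzy intervals `M, N` of a completely distributive complete lattice, with
endpoint functions `fM, gM, fN, gN`, the sets
`D p = [fM p ⊓ fN p, gM p ⊔ gN p]` satisfy: (i) `p ≤ q → D q ⊆ D p`;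
(ii) `⋂_{p ∈ P} D p = D (⋁ P)` for every `P ⊆ [0,1]`; (iii) `D 0 = X`. -/
theorem D_cut_properties {X : Type*} [CompleteLattice X]
    (hd1 : ∀ (x : X) (Y : Set X), x ⊔ sInf Y = ⨅ y ∈ Y, x ⊔ y)
    (hd2 : ∀ (x : X) (Y : Set X), x ⊓ sSup Y = ⨆ y ∈ Y, x ⊓ y)
    (M N : X → unitInterval) (hM : IsFuzzyInterval M) (hN : IsFuzzyInterval N)
    (fM gM fN gN : unitInterval → X)
    (hfM1 : ∀ p, (cut M p).Nonempty → fM p = sInf (cut M p))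
    (hfM2 : ∀ p, ¬(cut M p).Nonempty → fM p = ⊤)
    (hgM1 : ∀ p, (cut M p).Nonempty → gM p = sSup (cut M p))
    (hgM2 : ∀ p, ¬(cut M p).Nonempty → gM p = ⊥)
    (hfN1 : ∀ p, (cut N p).Nonempty → fN p = sInf (cut N p))
    (hfN2 : ∀ p, ¬(cut N p).Nonempty → fN p = ⊤)
    (hgN1 : ∀ p, (cut N p).Nonempty → gN p = sSup (cut N p))
    (hgN2 : ∀ p, ¬(cut N p).Nonempty → gN p = ⊥) :
    (∀ p q : unitInterval, p ≤ q →
      Set.Icc (fM q ⊓ fN q) (gM q ⊔ gN q) ⊆ Set.Icc (fM p ⊓ fN p) (gM p ⊔ gN p)) ∧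
    (∀ P : Set unitInterval,
      (⋂ p ∈ P, Set.Icc (fM p ⊓ fN p) (gM p ⊔ gN p)) =
        Set.Icc (fM (sSup P) ⊓ fN (sSup P)) (gM (sSup P) ⊔ gN (sSup P))) ∧
    Set.Icc (fM 0 ⊓ fN 0) (gM 0 ⊔ gN 0) = Set.univ := by
  have cm : ∀ (K : X → unitInterval) {p q}, p ≤ q → cut K q ⊆ cut K p :=
    fun K p q hpq x hx => le_trans hpq hx
  have c0 : ∀ K : X → unitInterval, cut K 0 = Set.univ :=
    fun K => Set.eq_univ_of_forall fun x => (K x).2.1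
  have e1 : fM = fun p => sInf (cut M p) := by
    funext p
    by_cases h : (cut M p).Nonempty
    · exact hfM1 p h
    · rw [hfM2 p h, Set.not_nonempty_iff_eq_empty.1 h, sInf_empty]
  have e2 : fN = fun p => sInf (cut N p) := by
    funext p
    by_cases h : (cut N p).Nonempty
    · exact hfN1 p h
    · rw [hfN2 p h, Set.not_nonempty_iff_eq_empty.1 h, sInf_empty]
  have e3 : gM = fun p => sSup (cut M p) := by
    funext p
    by_cases h : (cut M p).Nonempty
    · exact hgM1 p h
    · rw [hgM2 p h, Set.not_nonempty_iff_eq_empty.1 h, sSup_empty]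
  have e4 : gN = fun p => sSup (cut N p) := by
    funext p
    by_cases h : (cut N p).Nonempty
    · exact hgN1 p h
    · rw [hgN2 p h, Set.not_nonempty_iff_eq_empty.1 h, sSup_empty]
  have m1 : Monotone fM := fun p q h => by rw [e1]; exact sInf_le_sInf (cm M h)
  have m2 : Monotone fN := fun p q h => by rw [e2]; exact sInf_le_sInf (cm N h)
  have m3 : Antitone gM := fun p q h => by rw [e3]; exact sSup_le_sSup (cm M h)
  have m4 : Antitone gN := fun p q h => by rw [e4]; exact sSup_le_sSup (cm N h)
  have hi : ∀ p q : unitInterval, p ≤ q →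
      Set.Icc (fM q ⊓ fN q) (gM q ⊔ gN q) ⊆ Set.Icc (fM p ⊓ fN p) (gM p ⊔ gN p) :=
    fun p q h => Set.Icc_subset_Icc (inf_le_inf (m1 h) (m2 h)) (sup_le_sup (m3 h) (m4 h))
  refine ⟨hi, fun P => Set.Subset.antisymm ?_ ?_, ?_⟩
  · intro z hz
    simp only [Set.mem_iInter] at hz
    have k1 : fM (sSup P) ≤ ⨆ p ∈ P, fM p := by rw [e1]; exact key_inf M hM P
    have k2 : fN (sSup P) ≤ ⨆ p ∈ P, fN p := by rw [e2]; exact key_inf N hN P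
    have k3 : ⨅ p ∈ P, gM p ≤ gM (sSup P) := by rw [e3]; exact key_sup M hM P
    have k4 : ⨅ p ∈ P, gN p ≤ gN (sSup P) := by rw [e4]; exact key_sup N hN P
    constructor
    · exact (inf_le_inf k1 k2).trans (dir_inf hd2 fM fN m1 m2 P z fun p hp => (hz p hp).1)
    · refine le_trans ?_ (sup_le_sup k3 k4)
      exact dir_inf (X := Xᵒᵈ) hd1 gM gN (fun p q h => m3 h) (fun p q h => m4 h) P z
        fun p hp => (hz p hp).2
  · exact Set.subset_iInter₂ fun p hp => hi _ _ (le_sSup hp)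
  · simp [e1, e2, e3, e4, c0]
end

section
/- Let (X, ⊑) be a completely distributive complete lattice and let M, N be fuzzy intervals of X. Let M ∨̇ N denote the pointwise infimum of all fuzzy intervals A with M ≤ A and N ≤ A (the supremum of M and N among fuzzy intervals). Then for every p ∈ [0,1], the p-cut (M ∨̇ N)_p equals M_p ∪̇ N_p, the smallest closed interval of X containing both M_p and N_p (that is, the intersection of all closed intervals of X that contain both M_p and N_p). -/
theorem mem_cut_of_lt {X : Type*} {M : X → unitInterval} {p : unitInterval} {x : X}
    (h : ∀ q < p, q ≤ M x) : x ∈ cut M p := by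
  change p ≤ M x
  exact le_of_forall_lt_imp_le_of_dense h

theorem ci_eq {X : Type*} [CompleteLattice X] {S : Set X} (h : IsClosedInterval S)
    (hn : S.Nonempty) : S = Set.Icc (sInf S) (sSup S) := by
  rcases h with rfl | ⟨a, b, rfl⟩
  · exact absurd hn Set.not_nonempty_empty
  · have hab : a ≤ b := Set.nonempty_Icc.1 hn
    rw [csInf_Icc hab, csSup_Icc hab]

theorem cut_anti {X : Type*} (M : X → unitInterval) {p q : unitInterval} (h : p ≤ q) :
    cut M q ⊆ cut M p := fun _ hx => le_trans h hx

theorem cross {X : Type*} [CompleteLattice X] (M : X → unitInterval) (p : unitInterval)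
    (hn : ∀ q < p, (cut M q).Nonempty) {q r : unitInterval} (hq : q < p) (hr : r < p) :
    sInf (cut M r) ≤ sSup (cut M q) := by
  obtain ⟨z, hz⟩ := hn (max q r) (max_lt hq hr)
  exact (sInf_le (cut_anti M (le_max_right _ _) hz)).trans
    (le_sSup (cut_anti M (le_max_left _ _) hz))

theorem lo_mem {X : Type*} [CompleteLattice X] (M : X → unitInterval) (hM : IsFuzzyInterval M)
    (p : unitInterval) (hn : ∀ q < p, (cut M q).Nonempty) :
    sSup ((fun q => sInf (cut M q)) '' Set.Iio p) ∈ cut M p := by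
  refine mem_cut_of_lt fun q hq => ?_
  change _ ∈ cut M q
  rw [ci_eq (hM q) (hn q hq)]
  refine ⟨le_sSup ⟨q, hq, rfl⟩, sSup_le ?_⟩
  rintro _ ⟨r, hr, rfl⟩
  exact cross M p hn hq hr

theorem hi_mem {X : Type*} [CompleteLattice X] (M : X → unitInterval) (hM : IsFuzzyInterval M)
    (p : unitInterval) (hn : ∀ q < p, (cut M q).Nonempty) :
    sInf ((fun q => sSup (cut M q)) '' Set.Iio p) ∈ cut M p := by
  refine mem_cut_of_lt fun q hq => ?_
  change _ ∈ cut M q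
  rw [ci_eq (hM q) (hn q hq)]
  refine ⟨le_sInf ?_, sInf_le ⟨q, hq, rfl⟩⟩
  rintro _ ⟨r, hr, rfl⟩
  exact cross M p hn hr hq

def hullCut {X : Type*} [Lattice X] (M N : X → unitInterval) (p : unitInterval) : Set X :=
  ⋂₀ {S : Set X | IsClosedInterval S ∧ cut M p ⊆ S ∧ cut N p ⊆ S}

theorem ci_sInter {X : Type*} [CompleteLattice X] (F : Set (Set X))
    (hF : ∀ S ∈ F, IsClosedInterval S) : IsClosedInterval (⋂₀ F) := by
  by_cases h : (⋂₀ F).Nonempty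
  · right
    have hS : ∀ S ∈ F, S = Set.Icc (sInf S) (sSup S) := fun S hS =>
      ci_eq (hF S hS) (h.mono (Set.sInter_subset_of_mem hS))
    refine ⟨sSup (sInf '' F), sInf (sSup '' F), ?_⟩
    ext x
    constructor
    · intro hx
      refine ⟨sSup_le ?_, le_sInf ?_⟩
      · rintro _ ⟨S, h, rfl⟩; exact sInf_le (hx S h)
      · rintro _ ⟨S, h, rfl⟩; exact le_sSup (hx S h)
    · rintro ⟨h1, h2⟩ S h
      rw [hS S h]
      exact ⟨(le_sSup (Set.mem_image_of_mem _ h)).trans h1, h2.trans (sInf_le (Set.mem_image_of_mem _ h))⟩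
  · left; exact Set.not_nonempty_iff_eq_empty.1 h

theorem one_empty {X : Type*} [CompleteLattice X] (M N : X → unitInterval)
    (hM : IsFuzzyInterval M) (hN : IsFuzzyInterval N) (p : unitInterval) (x : X)
    (hx : ∀ q < p, x ∈ hullCut M N q) (he : ¬ ∀ q < p, (cut M q).Nonempty) :
    x ∈ cut N p := by
  push Not at he
  obtain ⟨q0, hq0, h0⟩ := he
  refine mem_cut_of_lt fun q hq => ?_
  refine (le_max_left q q0).trans ?_
  refine hx (max q q0) (max_lt hq hq0) (cut N (max q q0)) ⟨hN _, ?_, subset_rfl⟩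
  refine (cut_anti M (le_max_right q q0)).trans ?_
  rw [h0]; exact Set.empty_subset _

theorem hull_comm {X : Type*} [Lattice X] (M N : X → unitInterval) (p : unitInterval) :
    hullCut M N p = hullCut N M p := by
  unfold hullCut
  congr 1; ext S; constructor <;> rintro ⟨a, b, c⟩ <;> exact ⟨a, c, b⟩

theorem hull_key {X : Type*} [CompleteLattice X]
    (hd1 : ∀ (x : X) (Y : Set X), x ⊔ sInf Y = ⨅ y ∈ Y, x ⊔ y)
    (hd2 : ∀ (x : X) (Y : Set X), x ⊓ sSup Y = ⨆ y ∈ Y, x ⊓ y)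
    (M N : X → unitInterval) (hM : IsFuzzyInterval M) (hN : IsFuzzyInterval N)
    (p : unitInterval) (x : X) (hx : ∀ q < p, x ∈ hullCut M N q) : x ∈ hullCut M N p := by
  rintro S ⟨hS, hMS, hNS⟩
  by_cases h1 : ∀ q < p, (cut M q).Nonempty
  swap
  · exact hNS (one_empty M N hM hN p x hx h1)
  by_cases h2 : ∀ q < p, (cut N q).Nonempty
  swap
  · exact hMS (one_empty N M hN hM p x (fun q hq => hull_comm M N q ▸ hx q hq) h2)
  have a1 := hMS (lo_mem M hM p h1)
  have a2 := hMS (hi_mem M hM p h1)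
  have b1 := hNS (lo_mem N hN p h2)
  have b2 := hNS (hi_mem N hN p h2)
  have hb : ∀ q < p, x ∈ Set.Icc (sInf (cut M q) ⊓ sInf (cut N q))
      (sSup (cut M q) ⊔ sSup (cut N q)) := fun q hq =>
    hx q hq _ ⟨Or.inr ⟨_, _, rfl⟩,
      fun y hy => ⟨inf_le_left.trans (sInf_le hy), (le_sSup hy).trans le_sup_left⟩,
      fun y hy => ⟨inf_le_right.trans (sInf_le hy), (le_sSup hy).trans le_sup_right⟩⟩
  have anti {M : X → unitInterval} {q r : unitInterval} (h : q ≤ r) :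
      sInf (cut M q) ≤ sInf (cut M r) := sInf_le_sInf (cut_anti M h)
  have anti2 {M : X → unitInterval} {q r : unitInterval} (h : q ≤ r) :
      sSup (cut M r) ≤ sSup (cut M q) := sSup_le_sSup (cut_anti M h)
  rcases hS with rfl | ⟨s, t, rfl⟩
  · exact a1.elim
  constructor
  · refine (le_inf a1.1 b1.1).trans ?_
    rw [hd2]
    refine iSup₂_le ?_
    rintro _ ⟨q, hq, rfl⟩
    rw [inf_comm, hd2]
    refine iSup₂_le ?_
    rintro _ ⟨r, hr, rfl⟩
    refine le_trans ?_ (hb (max q r) (max_lt hq hr)).1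
    rw [inf_comm]
    exact inf_le_inf (anti (le_max_right _ _)) (anti (le_max_left _ _))
  · refine le_trans ?_ (sup_le a2.2 b2.2)
    rw [hd1]
    refine le_iInf₂ ?_
    rintro _ ⟨q, hq, rfl⟩
    rw [sup_comm, hd1]
    refine le_iInf₂ ?_
    rintro _ ⟨r, hr, rfl⟩
    refine le_trans (hb (max q r) (max_lt hq hr)).2 ?_
    rw [sup_comm (sSup (cut N q))]
    exact sup_le_sup (anti2 (le_max_right _ _)) (anti2 (le_max_left _ _))

/-- For fuzzy intervals `M, N` of a completely distributive complete lattice, the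
`p`-cut of `M ∨̇ N` is the smallest closed interval containing `M_p` and `N_p`,
i.e. the intersection of all closed intervals containing both. -/
theorem cut_fuzzySup {X : Type*} [CompleteLattice X]
    (hd1 : ∀ (x : X) (Y : Set X), x ⊔ sInf Y = ⨅ y ∈ Y, x ⊔ y)
    (hd2 : ∀ (x : X) (Y : Set X), x ⊓ sSup Y = ⨆ y ∈ Y, x ⊓ y)
    (M N : X → unitInterval) (hM : IsFuzzyInterval M) (hN : IsFuzzyInterval N)
    (p : unitInterval) :
    cut (fuzzySup M N) p =
      ⋂₀ {S : Set X | IsClosedInterval S ∧ cut M p ⊆ S ∧ cut N p ⊆ S} := by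
  change _ = hullCut M N p
  have hanti : ∀ {q r : unitInterval}, q ≤ r → hullCut M N r ⊆ hullCut M N q := by
    rintro q r h x hx S ⟨h1, h2, h3⟩
    exact hx S ⟨h1, (cut_anti M h).trans h2, (cut_anti N h).trans h3⟩
  let A : X → unitInterval := fun x => sSup {q | x ∈ hullCut M N q}
  have hA : ∀ q, cut A q = hullCut M N q := by
    intro q
    ext x
    constructor
    · intro hx
      refine hull_key hd1 hd2 M N hM hN q x fun r hr => ?_
      obtain ⟨s, hs, hrs⟩ := lt_sSup_iff.1 (lt_of_lt_of_le hr hx)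
      exact hanti hrs.le hs
    · intro hx
      exact le_sSup (show q ∈ {q | x ∈ hullCut M N q} from hx)
  have hAF : IsFuzzyInterval A := fun q => by
    rw [hA]; exact ci_sInter _ fun S hS => hS.1
  have hMA : M ≤ A := fun x => by
    change x ∈ cut A (M x)
    rw [hA]
    rintro S ⟨_, h, _⟩
    exact h (le_refl (M x))
  have hNA : N ≤ A := fun x => by
    change x ∈ cut A (N x)
    rw [hA]
    rintro S ⟨_, _, h⟩
    exact h (le_refl (N x))
  ext x
  constructor
  · intro hx
    rw [← hA]
    have hle : fuzzySup M N x ≤ A x :=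
      iInf₂_le (f := fun (A : X → unitInterval) (_ : A ∈ {A : X → unitInterval |
        IsFuzzyInterval A ∧ M ≤ A ∧ N ≤ A}) => A x) A ⟨hAF, hMA, hNA⟩
    exact le_trans hx hle
  · intro hx
    change p ≤ fuzzySup M N x
    refine le_iInf₂ ?_
    rintro B ⟨hB, hMB, hNB⟩
    exact hx (cut B p) ⟨hB p, fun y hy => le_trans hy (hMB y), fun y hy => le_trans hy (hNB y)⟩
end
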